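/- There is a constant c > 0 such that every satisfiable CTL* formula θ has a model with at most 2^{2^{c·|θ|}} states in which every state has at most |θ| successors, where |θ| denotes the number of subformulas of θ. -/

import Mathlib

/-- Branching-time formulas in negation normal form. -/
inductive Form : Type where
  | tt : Form
  | ff : Form
  | prop : ℕ → Form
  | nprop : ℕ → Form
  | or : Form → Form → Form
  | and : Form → Form → Form
  | next : Form → Form
  | unt : Form → Form → Form
  | rel : Form → Form → Form
  | ex : Form → Form
  | al : Form → Form
deriving DecidableEq

namespace Form

/-- The set of subformulas of a formula. -/
def subf : Form → Finset Form
  | .tt => {.tt}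
  | .ff => {.ff}
  | .prop p => {.prop p}
  | .nprop p => {.nprop p}
  | .or a b => insert (.or a b) (a.subf ∪ b.subf)
  | .and a b => insert (.and a b) (a.subf ∪ b.subf)
  | .next a => insert (.next a) a.subf
  | .unt a b => insert (.unt a b) (a.subf ∪ b.subf)
  | .rel a b => insert (.rel a b) (a.subf ∪ b.subf)
  | .ex a => insert (.ex a) a.subf
  | .al a => insert (.al a) a.subf

/-- Literals are `tt`, `ff`, `p` and `¬p`. -/
def IsLiteral : Form → Prop
  | .tt => True
  | .ff => True
  | .prop _ => True
  | .nprop _ => True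
  | _ => False

/-- A formula of the form `Xφ`. -/
def IsNext : Form → Prop
  | .next _ => True
  | _ => False

/-- Remove a frontal `X`. -/
def unX : Form → Form
  | .next a => a
  | a => a

end Form

/-- The Fischer-Ladner closure of a formula: its subformulas together with
`X(φ U ψ)` for every subformula `φ U ψ` and `X(φ R ψ)` for every subformula `φ R ψ`. -/
def FL (θ : Form) : Finset Form :=
  θ.subf ∪ θ.subf.image (fun ψ =>
    match ψ with
    | .unt a b => Form.next (.unt a b)
    | .rel a b => Form.next (.rel a b)
    | _ => θ)

/-- A (total) transition system with a designated initial state and a labeling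
of states with sets of propositional constants. -/
structure TS (S : Type) where
  init : S
  step : S → S → Prop
  total : ∀ s, ∃ t, step s t
  label : S → Set ℕ

/-- An infinite path through a transition system. -/
structure TS.Path {S : Type} (T : TS S) where
  seq : ℕ → S
  valid : ∀ i, T.step (seq i) (seq (i + 1))

/-- The suffix `π^k` of a path `π`. -/
def TS.Path.suffix {S : Type} {T : TS S} (π : T.Path) (k : ℕ) : T.Path :=
  ⟨fun i => π.seq (k + i), fun i => π.valid (k + i)⟩

/-- Satisfaction of a branching-time formula on a path of a transition system. -/
def Sat {S : Type} (T : TS S) : T.Path → Form → Prop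
  | _, .tt => True
  | _, .ff => False
  | π, .prop p => p ∈ T.label (π.seq 0)
  | π, .nprop p => p ∉ T.label (π.seq 0)
  | π, .or a b => Sat T π a ∨ Sat T π b
  | π, .and a b => Sat T π a ∧ Sat T π b
  | π, .next a => Sat T (π.suffix 1) a
  | π, .unt a b => ∃ k, Sat T (π.suffix k) b ∧ ∀ j < k, Sat T (π.suffix j) a
  | π, .rel a b => ∀ k, Sat T (π.suffix k) b ∨ ∃ j < k, Sat T (π.suffix j) a
  | π, .ex a => ∃ π' : T.Path, π'.seq 0 = π.seq 0 ∧ Sat T π' a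
  | π, .al a => ∀ π' : T.Path, π'.seq 0 = π.seq 0 → Sat T π' a

/-- A state formula: satisfaction only depends on the first state of the path. -/
def IsStateForm (φ : Form) : Prop :=
  ∀ (S : Type) (T : TS S) (π π' : T.Path), π.seq 0 = π'.seq 0 → (Sat T π φ ↔ Sat T π' φ)

/-- A (state) formula is satisfiable if it holds at the initial state of some
transition system. -/
def Satisfiable (φ : Form) : Prop :=
  ∃ (S : Type) (T : TS S) (π : T.Path), π.seq 0 = T.init ∧ Sat T π φ

/-- Equivalence of branching-time formulas. -/
def FormEquiv (φ ψ : Form) : Prop :=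
  ∀ (S : Type) (T : TS S) (π : T.Path), Sat T π φ ↔ Sat T π ψ

/-!
Unfold a model of `θ` into a tree whose vertices are paths of the model: a vertex has one child that
continues its path, and for every subformula `Eψ` one child on a path that witnesses `Eψ`. That a
subformula fails on a branch of such a tree is certified by a fair run of a nondeterministic
automaton (a *thread*) with `2 ^ O(|θ|)` states, which guesses the false subformulas and uses a
breakpoint construction to see that no release formula is kept false by postponement alone. Hence
a graph labelled like the tree is a model as soon as it has no more fair threads than the tree.

Thread states without fair run have an ordinal rank that never increases along a run and drops after
each visit to an empty breakpoint. The quotient remembers, of a vertex, the true subformulas, the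
thread states without fair run, and a list of sets of the form `{q | rank q ≤ γ}`, ordered by the
seniority of the threshold `γ`; each class is represented by a vertex whose list of thresholds is
shortlex-minimal. Along a path of the quotient a drop of rank that happens infinitely often would
make these minimal lists decrease forever, so the quotient has no new fair threads.
-/

open Filter Relation

/-! ### Sequences decreasing along a well-founded relation -/

theorem eventually_const_of_wellFounded {β : Type*} {r : β → β → Prop} (hr : WellFounded r)
    {f : ℕ → β} (hf : ∀ᶠ n in atTop, f (n + 1) = f n ∨ r (f (n + 1)) (f n)) :
    ∃ c, ∀ᶠ n in atTop, f n = c := by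
  obtain ⟨N, hN⟩ := eventually_atTop.1 hf
  obtain ⟨_, ⟨k, hk, rfl⟩, hmin⟩ := hr.has_min (f '' Set.Ici N) ⟨f N, N, Set.self_mem_Ici, rfl⟩
  refine ⟨f k, eventually_atTop.2 ⟨k, fun n hn => ?_⟩⟩
  induction n, hn using Nat.le_induction with
  | base => rfl
  | succ n hn ih =>
    have hNn : N ≤ n := le_trans hk hn
    exact (hN n hNn).elim (·.trans ih) fun hlt =>
      absurd (ih ▸ hlt) (hmin _ ⟨n + 1, hNn.trans n.le_succ, rfl⟩)

theorem frequently_iterate_of_forall_or_lt {X : Type*} {F : X → Prop} {next : X → X} {d : X → ℕ}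
    (h : ∀ x, F x ∨ d (next x) < d x) (x : X) : ∃ᶠ n in atTop, F (next^[n] x) := by
  intro hF
  have hlt : ∀ᶠ n in atTop, d (next^[n + 1] x) < d (next^[n] x) := by
    filter_upwards [hF] with n hn
    rw [Function.iterate_succ_apply']
    exact (h _).resolve_left hn
  obtain ⟨c, hc⟩ := eventually_const_of_wellFounded (f := fun n => d (next^[n] x)) wellFounded_lt
    (hlt.mono fun _ => Or.inr)
  obtain ⟨n, hn, hn₀, hn₁⟩ := (hlt.and (hc.and ((tendsto_add_atTop_nat 1).eventually hc))).exists
  exact hn.ne (hn₁.trans hn₀.symm)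

/-! ### Fair runs -/

/-- A fair run of the graph `r` from `x`: an infinite path that visits `F` infinitely often. -/
def HasFairRun {X : Type*} (r : X → X → Prop) (F : X → Prop) (x : X) : Prop :=
  ∃ u : ℕ → X, u 0 = x ∧ (∀ n, r (u n) (u (n + 1))) ∧ ∃ᶠ n in atTop, F (u n)

/-- Reachability of a state of `F` in exactly `n` steps of `r`. -/
def ReachesIn {X : Type*} (r : X → X → Prop) (F : X → Prop) : ℕ → X → Prop
  | 0, x => F x
  | n + 1, x => ∃ y, r x y ∧ ReachesIn r F n y

/-- `FairDescent r F y x` holds if `y` is reachable from `x` by a path of `r` that leaves some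
state of `F`. An infinite descent is a fair run cut into pieces, so the rank of this relation
measures how far a state is from having one. -/
def FairDescent {X : Type*} (r : X → X → Prop) (F : X → Prop) (y x : X) : Prop :=
  ∃ z z', ReflTransGen r x z ∧ F z ∧ r z z' ∧ ReflTransGen r z' y

open scoped Classical in
/-- The rank of `x` in the well-founded part of `FairDescent r F`, and the junk value `0` at states
that have a fair run. -/
noncomputable def fairRank {X : Type*} (r : X → X → Prop) (F : X → Prop) (x : X) : Ordinal :=
  if h : Acc (FairDescent r F) x then h.rank else 0

section FairRun

variable {X : Type*} {r : X → X → Prop} {F : X → Prop} {x y : X}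

theorem HasFairRun.of_step (hxy : r x y) (hy : HasFairRun r F y) : HasFairRun r F x := by
  obtain ⟨u, rfl, hu, hF⟩ := hy
  refine ⟨fun n => n.casesOn x u, rfl, fun n => ?_, ?_⟩
  · cases n with
    | zero => exact hxy
    | succ n => exact hu n
  · exact (tendsto_add_atTop_nat 1).frequently hF

theorem exists_reachesIn_of_reflTransGen (hxy : ReflTransGen r x y) (hy : F y) :
    ∃ n, ReachesIn r F n x := by
  induction hxy using ReflTransGen.head_induction_on with
  | refl => exact ⟨0, hy⟩
  | head hstep _ ih =>
    obtain ⟨n, hn⟩ := ih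
    exact ⟨n + 1, _, hstep, hn⟩

theorem hasFairRun_of_forall_reaches (htotal : ∀ x, ∃ y, r x y)
    (hreach : ∀ x, ∃ z, ReflTransGen r x z ∧ F z) (x : X) : HasFairRun r F x := by
  have hne (x : X) : {n | ReachesIn r F n x}.Nonempty :=
    let ⟨_, hz, hF⟩ := hreach x
    exists_reachesIn_of_reflTransGen hz hF
  let dist (x : X) : ℕ := sInf {n | ReachesIn r F n x}
  have approach (x : X) : ∃ y, r x y ∧ (F x ∨ dist y < dist x) := by
    have hx : ReachesIn r F (dist x) x := Nat.sInf_mem (hne x)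
    rcases hd : dist x with _ | k <;> rw [hd] at hx
    · exact (htotal x).imp fun _ hy => ⟨hy, .inl hx⟩
    · obtain ⟨y, hxy, hy⟩ := hx
      exact ⟨y, hxy, .inr (Nat.lt_succ_of_le (Nat.sInf_le hy))⟩
  choose next hstep hnext using approach
  refine ⟨fun n => next^[n] x, rfl, fun n => ?_, frequently_iterate_of_forall_or_lt hnext x⟩
  simpa only [Function.iterate_succ_apply'] using hstep _

theorem FairDescent.of_reflTransGen {w : X} (hxy : ReflTransGen r x y) (h : FairDescent r F w y) :
    FairDescent r F w x := by
  obtain ⟨z, z', hz, hF, hstep, hw⟩ := h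
  exact ⟨z, z', hxy.trans hz, hF, hstep, hw⟩

theorem acc_fairDescent_of_reflTransGen (hxy : ReflTransGen r x y)
    (hx : Acc (FairDescent r F) x) : Acc (FairDescent r F) y :=
  ⟨y, fun _ hw => hx.inv (hw.of_reflTransGen hxy)⟩

theorem hasFairRun_of_not_acc (hx : ¬ Acc (FairDescent r F) x) : HasFairRun r F x := by
  let N := {x // ¬ Acc (FairDescent r F) x}
  let rN (a b : N) : Prop := r a b
  have lift {a b : X} (hab : ReflTransGen r a b) (hb : ¬ Acc (FairDescent r F) b) :
      ReflTransGen rN ⟨a, fun h => hb (acc_fairDescent_of_reflTransGen hab h)⟩ ⟨b, hb⟩ := by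
    induction hab using ReflTransGen.head_induction_on with
    | refl => exact .refl
    | head hstep _ ih => exact .head (b := ⟨_, _⟩) hstep ih
  have descend (a : N) : ∃ z z' : N, ReflTransGen rN a z ∧ F z ∧ rN z z' := by
    obtain ⟨b, ⟨z, z', haz, hF, hzz', hz'b⟩, hb⟩ :
        ∃ b, FairDescent r F b a ∧ ¬ Acc (FairDescent r F) b := by
      by_contra! h
      exact a.2 ⟨_, h⟩
    exact ⟨⟨z, _⟩, ⟨z', fun h => hb (acc_fairDescent_of_reflTransGen hz'b h)⟩,
      lift haz fun h => hb (acc_fairDescent_of_reflTransGen (hz'b.head hzz') h), hF, hzz'⟩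
  obtain ⟨u, hu₀, hu, hF⟩ := hasFairRun_of_forall_reaches (r := rN) (F := fun a => F a)
    (fun a => by
      obtain ⟨z, z', haz, -, hzz'⟩ := descend a
      rcases haz.cases_head with rfl | ⟨b, hab, -⟩
      exacts [⟨z', hzz'⟩, ⟨b, hab⟩])
    (fun a => by
      obtain ⟨z, _, haz, hFz, -⟩ := descend a
      exact ⟨z, haz, hFz⟩) ⟨x, hx⟩
  exact ⟨fun n => u n, congrArg Subtype.val hu₀, hu, hF⟩

theorem fairRank_le_of_step (hx : ¬ HasFairRun r F x) (hxy : r x y) :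
    fairRank r F y ≤ fairRank r F x := by
  have hacc : Acc (FairDescent r F) x := not_not.1 fun h => hx (hasFairRun_of_not_acc h)
  have hacc' := acc_fairDescent_of_reflTransGen (.single hxy) hacc
  rw [fairRank, fairRank, dif_pos hacc, dif_pos hacc', hacc'.rank_eq]
  exact Ordinal.iSup_le fun ⟨w, hw⟩ =>
    Order.succ_le_of_lt (hacc.rank_lt_of_rel (hw.of_reflTransGen (.single hxy)))

theorem fairRank_lt_of_step (hx : ¬ HasFairRun r F x) (hF : F x) (hxy : r x y) :
    fairRank r F y < fairRank r F x := by
  have hacc : Acc (FairDescent r F) x := not_not.1 fun h => hx (hasFairRun_of_not_acc h)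
  have hacc' := acc_fairDescent_of_reflTransGen (.single hxy) hacc
  rw [fairRank, fairRank, dif_pos hacc, dif_pos hacc']
  exact hacc.rank_lt_of_rel ⟨x, y, .refl, hF, hxy, .refl⟩

end FairRun

/-! ### Cuts and seniority lists -/

theorem lex_append_append_of_length_eq {α : Type*} {r : α → α → Prop} {s t : List α}
    (h : List.Lex r s t) (hlen : s.length = t.length) (u v : List α) :
    List.Lex r (s ++ u) (t ++ v) := by
  induction h with
  | nil => simp at hlen
  | cons _ ih => exact .cons (ih (by simpa using hlen))
  | rel hr => exact .rel hr

theorem take_eq_or_shortlex_take_of_not_shortlex {α : Type*} [LinearOrder α] {s t : List α}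
    (hlen : s.length = t.length) (h : ¬ List.Shortlex (· < ·) t s) (k : ℕ) :
    s.take k = t.take k ∨ List.Shortlex (· < ·) (s.take k) (t.take k) := by
  have hlen' : (s.take k).length = (t.take k).length := by simp [hlen]
  rcases trichotomous_of (List.Shortlex (· < ·)) (s.take k) (t.take k) with hst | heq | hts
  · exact .inr hst
  · exact .inl heq
  · have hlex := lex_append_append_of_length_eq ((List.shortlex_iff_lex hlen'.symm).1 hts)
      hlen'.symm (t.drop k) (s.drop k)
    rw [List.take_append_drop, List.take_append_drop] at hlex
    exact absurd (.of_lex hlen.symm hlex) h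

/-- The list `l` with every entry removed whose key `f` already occurs further left. -/
def dedupOn {α β : Type*} [DecidableEq β] (f : α → β) (l : List α) : List α :=
  (l.reverse.pwFilter fun x y => f x ≠ f y).reverse

section DedupOn

variable {α β : Type*} [DecidableEq β] (f : α → β) (l l' : List α)

theorem dedupOn_sublist : (dedupOn f l).Sublist l := by
  simpa only [dedupOn, List.reverse_reverse] using
    (List.pwFilter_sublist (R := fun x y => f x ≠ f y) l.reverse).reverse

theorem nodup_map_dedupOn : ((dedupOn f l).map f).Nodup := by
  rw [List.Nodup, List.pairwise_map, dedupOn, List.pairwise_reverse]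
  exact (List.pairwise_pwFilter l.reverse).imp Ne.symm

theorem exists_mem_dedupOn {x : α} (hx : x ∈ l) : ∃ y ∈ dedupOn f l, f y = f x := by
  by_contra! hne
  have hall := (List.forall_mem_pwFilter (R := fun x y => f x ≠ f y)
    (fun {x y z} hxz => not_and_or.1 fun h => hxz (h.1.trans h.2)) x l.reverse).1
    fun y hy => (hne y (List.mem_reverse.2 hy)).symm
  exact hall x (List.mem_reverse.2 hx) rfl

theorem dedupOn_prefix_dedupOn_append : dedupOn f l <+: dedupOn f (l ++ l') := by
  rw [dedupOn, dedupOn, List.reverse_append, List.reverse_prefix]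
  induction l'.reverse with
  | nil => exact List.suffix_rfl
  | cons x t ih =>
    by_cases hx : ∀ y ∈ List.pwFilter (fun x y => f x ≠ f y) (t ++ l.reverse), f x ≠ f y
    · rw [List.cons_append, List.pwFilter_cons_of_pos hx]
      exact ih.trans (List.suffix_cons _ _)
    · rw [List.cons_append, List.pwFilter_cons_of_neg hx]
      exact ih

theorem exists_getElem?_dedupOn_append {i : ℕ} {x : α} (hx : l[i]? = some x) :
    ∃ j ≤ i, ∃ y, (dedupOn f (l ++ l'))[j]? = some y ∧ f y = f x ∧
      (j = i → l.take (i + 1) <+: dedupOn f (l ++ l')) := by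
  have hprefix : dedupOn f (l.take (i + 1)) <+: dedupOn f (l ++ l') := by
    simpa only [← List.append_assoc, List.take_append_drop] using
      dedupOn_prefix_dedupOn_append f (l.take (i + 1)) (l.drop (i + 1) ++ l')
  have hsub := dedupOn_sublist f (l.take (i + 1))
  have hlen := List.length_take_le (i + 1) l
  have hmem : x ∈ l.take (i + 1) :=
    List.mem_of_getElem? (i := i) (by rwa [List.getElem?_take_of_lt i.lt_succ_self])
  obtain ⟨y, hy, hyx⟩ := exists_mem_dedupOn f _ hmem
  obtain ⟨j, hj, rfl⟩ := List.getElem_of_mem hy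
  have hji : j ≤ i := by have := hsub.length_le; lia
  refine ⟨j, hji, _, List.prefix_iff_getElem?.1 hprefix j hj, hyx, fun heq => ?_⟩
  rwa [hsub.eq_of_length_le (by lia)] at hprefix

end DedupOn

/-- The `q` whose rank is at most the threshold `x`. -/
def cut {Q α : Type*} [Fintype Q] [LinearOrder α] (ρ : Q → α) (x : α) : Finset Q :=
  {q | ρ q ≤ x}

/-- One step of a seniority list of thresholds: thresholds whose cut occurs earlier in the list are
dropped, and the cuts that are missing from the list join at its end. -/
noncomputable def refresh {Q α : Type*} [Fintype Q] [DecidableEq Q] [LinearOrder α] (ρ : Q → α)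
    (l : List α) : List α :=
  dedupOn (cut ρ) (l ++ Finset.univ.toList.map ρ)

section Cut

variable {Q α : Type*} [Fintype Q] [LinearOrder α] (ρ : Q → α)

@[simp]
theorem mem_cut {q : Q} {x : α} : q ∈ cut ρ x ↔ ρ q ≤ x := by simp [cut]

theorem cut_mono : Monotone (cut ρ) := fun _ _ hxy _ hq => by
  rw [mem_cut] at hq ⊢
  exact hq.trans hxy

theorem cut_eq_of_card_eq {x y : α} (h : (cut ρ x).card = (cut ρ y).card) : cut ρ x = cut ρ y := by
  rcases le_total x y with hxy | hyx
  · exact Finset.eq_of_subset_of_card_le (cut_mono ρ hxy) h.ge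
  · exact (Finset.eq_of_subset_of_card_le (cut_mono ρ hyx) h.le).symm

theorem length_le_of_nodup_map_cut {l : List α} (hl : (l.map (cut ρ)).Nodup) :
    l.length ≤ Fintype.card Q + 1 := by
  have hcard : (l.map fun x => (cut ρ x).card).Nodup := by
    rw [List.Nodup, List.pairwise_map] at hl ⊢
    exact hl.imp fun hne heq => hne (cut_eq_of_card_eq ρ heq)
  have hsub : (l.map fun x => (cut ρ x).card).toFinset ⊆ Finset.range (Fintype.card Q + 1) := by
    intro k hk
    obtain ⟨x, -, rfl⟩ := List.mem_map.1 (List.mem_toFinset.1 hk)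
    exact Finset.mem_range_succ_iff.2 (Finset.card_le_univ _)
  simpa [List.toFinset_card_of_nodup hcard] using Finset.card_le_card hsub

variable [DecidableEq Q]

theorem nodup_map_cut_refresh (l : List α) : ((refresh ρ l).map (cut ρ)).Nodup :=
  nodup_map_dedupOn _ _

theorem exists_getElem?_refresh_cut_eq (l : List α) (q : Q) :
    ∃ (i : ℕ) (x : α), (refresh ρ l)[i]? = some x ∧ cut ρ x = cut ρ (ρ q) := by
  have hmem : ρ q ∈ l ++ Finset.univ.toList.map ρ := by simp
  obtain ⟨x, hx, hcut⟩ := exists_mem_dedupOn (cut ρ) _ hmem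
  obtain ⟨i, hi⟩ := List.getElem?_of_mem hx
  exact ⟨i, x, hi, hcut⟩

end Cut

/-! ### Ranks along a path of minimal seniority lists -/

/-- Seniority lists along a path on which the ranks `ρ n` turn into `σ n` by a step of the original
graph and into `ρ (n + 1)` by passing to a minimal representative: `a (n + 1)` has the same cuts as
the refreshed list `a n`, and is shortlex-minimal with this property. -/
structure SeniorityRun {Q α : Type*} [Fintype Q] [DecidableEq Q] [LinearOrder α]
    (ρ σ : ℕ → Q → α) (a : ℕ → List α) : Prop where
  map_cut_succ : ∀ n,
    (a (n + 1)).map (cut (ρ (n + 1))) = (refresh (σ n) (a n)).map (cut (σ n))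
  minimal : ∀ n l, l.map (cut (σ n)) = (refresh (σ n) (a n)).map (cut (σ n)) →
    ¬ List.Shortlex (· < ·) l (a (n + 1))

/-- From some point on, `c` is an initial segment of the seniority lists, before and after each
refreshment. -/
def SettledPrefix {Q α : Type*} [Fintype Q] [DecidableEq Q] [LinearOrder α]
    (σ : ℕ → Q → α) (a : ℕ → List α) (c : List α) : Prop :=
  ∀ᶠ n in atTop, c <+: a n ∧ c <+: refresh (σ n) (a n)

/-- The entry of `l` at position `i` lies above `x`, but below all entries of `c` above `x`. -/
def SeparatesAt {α : Type*} [LinearOrder α] (c l : List α) (x : α) (i : ℕ) : Prop :=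
  ∃ y, l[i]? = some y ∧ x ≤ y ∧ ∀ z ∈ c, x ≤ z → y < z

section SeniorityRun

variable {Q α : Type*} [Fintype Q] [DecidableEq Q] [LinearOrder α] {ρ σ : ℕ → Q → α}
  {a : ℕ → List α} {c : List α}

theorem SettledPrefix.length_le (hc : SettledPrefix σ a c) : c.length ≤ Fintype.card Q + 1 := by
  obtain ⟨n, -, hn⟩ := hc.exists
  exact hn.length_le.trans (length_le_of_nodup_map_cut (σ n) (nodup_map_cut_refresh _ _))

theorem exists_longest_settledPrefix (σ : ℕ → Q → α) (a : ℕ → List α) :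
    ∃ c, SettledPrefix σ a c ∧ ∀ c', SettledPrefix σ a c' → c'.length ≤ c.length := by
  let lengths := List.length '' {c | SettledPrefix σ a c}
  have hne : lengths.Nonempty :=
    ⟨_, [], .of_forall fun _ => ⟨List.nil_prefix, List.nil_prefix⟩, rfl⟩
  have hbdd : BddAbove lengths := ⟨_, Set.forall_mem_image.2 fun _ hc => hc.length_le⟩
  obtain ⟨c, hc, hmax⟩ := Nat.sSup_mem hne hbdd
  exact ⟨c, hc, fun c' hc' => hmax ▸ le_csSup hbdd ⟨c', hc', rfl⟩⟩

namespace SeniorityRun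

theorem exists_settledPrefix_of_take_prefix [WellFoundedLT α] (h : SeniorityRun ρ σ a) {k : ℕ}
    (hk : ∀ᶠ n in atTop, k ≤ (a n).length ∧ (a n).take k <+: refresh (σ n) (a n)) :
    ∃ c, SettledPrefix σ a c ∧ c.length = k := by
  obtain ⟨c, hc⟩ := eventually_const_of_wellFounded (f := fun n => (a n).take k)
    (List.Shortlex.wf wellFounded_lt) <| by
      filter_upwards [hk] with n ⟨hlen, hpre⟩
      have htake : (a n).take k = (refresh (σ n) (a n)).take k := by
        rw [List.prefix_iff_eq_take, List.length_take_of_le hlen] at hpre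
        exact hpre
      have hlen' : (a (n + 1)).length = (refresh (σ n) (a n)).length := by
        simpa only [List.length_map] using congrArg List.length (h.map_cut_succ n)
      rw [htake]
      exact take_eq_or_shortlex_take_of_not_shortlex hlen' (h.minimal n _ rfl) k
  refine ⟨c, ?_, ?_⟩
  · filter_upwards [hc, hk] with n hcn ⟨_, hpre⟩
    exact hcn ▸ ⟨List.take_prefix _ _, hpre⟩
  · obtain ⟨n, hcn, hlen, -⟩ := (hc.and hk).exists
    rw [← hcn, List.length_take_of_le hlen]

theorem eventually_cut_eq (h : SeniorityRun ρ σ a) (hc : SettledPrefix σ a c) :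
    ∀ᶠ n in atTop, ∀ x ∈ c, cut (ρ (n + 1)) x = cut (σ n) x := by
  filter_upwards [hc, (tendsto_add_atTop_nat 1).eventually hc] with n ⟨_, ⟨u, hu⟩⟩ ⟨⟨v, hv⟩, _⟩
  have hmap := h.map_cut_succ n
  rw [← hu, ← hv, List.map_append, List.map_append] at hmap
  exact List.map_inj_left.1 (List.append_inj_left hmap (by simp))

/-- Otherwise replacing `x` by `y` would give a smaller list with the same cuts. -/
theorem eventually_cut_ne_of_lt (h : SeniorityRun ρ σ a) (hc : SettledPrefix σ a c) :
    ∀ᶠ n in atTop, ∀ x ∈ c, ∀ y < x, cut (σ n) y ≠ cut (σ n) x := by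
  filter_upwards [hc, (tendsto_add_atTop_nat 1).eventually hc] with n ⟨_, hb⟩ ⟨ha, _⟩ x hx y hyx heq
  obtain ⟨s, t, rfl⟩ := List.append_of_mem hx
  obtain ⟨u, hu⟩ := hb
  obtain ⟨v, hv⟩ := ha
  have hlen := congrArg List.length (h.map_cut_succ n)
  refine h.minimal n (s ++ y :: (t ++ u)) ?_ ?_
  · rw [← hu]
    simp [heq]
  · rw [← hu, ← hv] at hlen
    rw [← hv, List.append_assoc, List.cons_append]
    exact .append_left (.of_lex (by simpa using hlen.symm) (.rel hyx)) s

variable {q : ℕ → Q}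

theorem eventually_le_iff_le_succ (h : SeniorityRun ρ σ a) (hc : SettledPrefix σ a c)
    (hq : ∀ n, σ n (q (n + 1)) ≤ ρ n (q n)) :
    ∀ᶠ n in atTop, ∀ x ∈ c, ρ n (q n) ≤ x ↔ ρ (n + 1) (q (n + 1)) ≤ x := by
  let below (n : ℕ) : Finset α := {x ∈ c.toFinset | x < ρ n (q n)}
  obtain ⟨D, hD⟩ := eventually_const_of_wellFounded (f := below) wellFounded_lt <| by
    filter_upwards [h.eventually_cut_eq hc] with n hcut
    refine eq_or_lt_of_le fun x hx => ?_
    simp only [below, Finset.mem_filter, List.mem_toFinset] at hx ⊢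
    refine ⟨hx.1, lt_of_not_ge fun hle => hx.2.not_ge ?_⟩
    rw [← mem_cut, hcut x hx.1, mem_cut]
    exact (hq n).trans hle
  filter_upwards [hD, (tendsto_add_atTop_nat 1).eventually hD] with n hn hn' x hx
  have : x ∈ below n ↔ x ∈ below (n + 1) := by rw [hn, hn']
  simpa [below, hx, ← not_le, not_iff_not] using this

theorem eventually_separatesAt_succ (h : SeniorityRun ρ σ a) (hc : SettledPrefix σ a c)
    (hq : ∀ n, σ n (q (n + 1)) ≤ ρ n (q n)) :
    ∀ᶠ n in atTop, ∀ y, σ n (q (n + 1)) ≤ y → (∀ x ∈ c, ρ n (q n) ≤ x → y < x) →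
      ∀ i z, (refresh (σ n) (a n))[i]? = some z → cut (σ n) z = cut (σ n) y →
        SeparatesAt c (a (n + 1)) (ρ (n + 1) (q (n + 1))) i := by
  filter_upwards [h.eventually_cut_eq hc, h.eventually_cut_ne_of_lt hc,
    h.eventually_le_iff_le_succ hc hq] with n hcut htight hle y hqy hy i z hz hzy
  have hmap := congrArg (·[i]?) (h.map_cut_succ n)
  simp only [List.getElem?_map, hz, Option.map_some, Option.map_eq_some_iff] at hmap
  obtain ⟨z', hz', hz'z⟩ := hmap
  have hz'y : cut (ρ (n + 1)) z' = cut (σ n) y := hz'z.trans hzy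
  refine ⟨z', hz', ?_, fun x hx hqx => lt_of_not_ge fun hxz' => ?_⟩
  · rw [← mem_cut, hz'y, mem_cut]
    exact hqy
  · have hyx : y < x := hy x hx ((hle x hx).2 hqx)
    refine htight x hx y hyx ((cut_mono _ hyx.le).antisymm ?_)
    rw [← hz'y, ← hcut x hx]
    exact cut_mono _ hxz'

theorem eventually_exists_separatesAt_of_lt (h : SeniorityRun ρ σ a) (hc : SettledPrefix σ a c)
    (hq : ∀ n, σ n (q (n + 1)) ≤ ρ n (q n)) :
    ∀ᶠ n in atTop, σ n (q (n + 1)) < ρ n (q n) →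
      ∃ i, SeparatesAt c (a (n + 1)) (ρ (n + 1) (q (n + 1))) i := by
  filter_upwards [h.eventually_separatesAt_succ hc hq] with n hsep hlt
  obtain ⟨i, z, hz, hcut⟩ := exists_getElem?_refresh_cut_eq (σ n) (a n) (q (n + 1))
  exact ⟨i, hsep _ le_rfl (fun x _ hx => hlt.trans_le hx) i z hz hcut⟩

theorem eventually_exists_separatesAt_succ_le (h : SeniorityRun ρ σ a) (hc : SettledPrefix σ a c)
    (hq : ∀ n, σ n (q (n + 1)) ≤ ρ n (q n)) :
    ∀ᶠ n in atTop, ∀ i, SeparatesAt c (a n) (ρ n (q n)) i →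
      ∃ j ≤ i, SeparatesAt c (a (n + 1)) (ρ (n + 1) (q (n + 1))) j ∧
        (j = i → (a n).take (i + 1) <+: refresh (σ n) (a n)) := by
  filter_upwards [h.eventually_separatesAt_succ hc hq] with n hsep i ⟨y, hy, hqy, hyc⟩
  obtain ⟨j, hji, z, hz, hcut, htake⟩ :=
    exists_getElem?_dedupOn_append (cut (σ n)) _ (Finset.univ.toList.map (σ n)) hy
  exact ⟨j, hji, hsep y ((hq n).trans hqy) hyc j z hz hcut, htake⟩

theorem frequently_forall_not_separatesAt [WellFoundedLT α] (h : SeniorityRun ρ σ a)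
    (hc : SettledPrefix σ a c) (hmax : ∀ c', SettledPrefix σ a c' → c'.length ≤ c.length)
    (hq : ∀ n, σ n (q (n + 1)) ≤ ρ n (q n)) :
    ∃ᶠ n in atTop, ∀ i, ¬ SeparatesAt c (a n) (ρ n (q n)) i := by
  intro hsep
  simp only [not_forall, not_not] at hsep
  let leastPos (n : ℕ) : ℕ := sInf {i | SeparatesAt c (a n) (ρ n (q n)) i}
  have hleast : ∀ᶠ n in atTop, SeparatesAt c (a n) (ρ n (q n)) (leastPos n) :=
    hsep.mono fun n hn => Nat.sInf_mem hn
  have hpersist := h.eventually_exists_separatesAt_succ_le hc hq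
  obtain ⟨p, hp⟩ := eventually_const_of_wellFounded (f := leastPos) wellFounded_lt <| by
    filter_upwards [hleast, hpersist] with n hn hnext
    obtain ⟨j, hj, hsep', -⟩ := hnext _ hn
    exact ((Nat.sInf_le hsep').trans hj).eq_or_lt
  obtain ⟨c', hc', hlen⟩ := h.exists_settledPrefix_of_take_prefix (k := p + 1) <| by
    filter_upwards [hleast, hpersist, hp, (tendsto_add_atTop_nat 1).eventually hp]
      with n hn hnext hpn hpn'
    rw [hpn] at hn
    obtain ⟨j, hj, hsep', htake⟩ := hnext _ hn
    obtain ⟨y, hy, -⟩ := hn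
    exact ⟨(List.getElem?_eq_some_iff.1 hy).1, htake (hj.antisymm (hpn' ▸ Nat.sInf_le hsep'))⟩
  have hpc : p < c.length := hlen.ge.trans (hmax c' hc')
  obtain ⟨n, hn, hpn, ⟨u, hu⟩, -⟩ := (hleast.and (hp.and hc)).exists
  obtain ⟨y, hy, hqy, hyc⟩ := hpn ▸ hn
  rw [← hu, List.getElem?_append_left hpc] at hy
  exact (hyc y (List.mem_of_getElem? hy) hqy).false

theorem eventually_not_lt [WellFoundedLT α] (h : SeniorityRun ρ σ a)
    (hq : ∀ n, σ n (q (n + 1)) ≤ ρ n (q n)) :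
    ∀ᶠ n in atTop, ¬ σ n (q (n + 1)) < ρ n (q n) := by
  obtain ⟨c, hc, hmax⟩ := exists_longest_settledPrefix σ a
  obtain ⟨N, hN⟩ := eventually_atTop.1 ((h.eventually_exists_separatesAt_of_lt hc hq).and
    (h.eventually_exists_separatesAt_succ_le hc hq))
  refine eventually_atTop.2 ⟨N, fun k hk hlt => h.frequently_forall_not_separatesAt hc hmax hq ?_⟩
  refine eventually_atTop.2 ⟨k + 1, fun n hn => not_forall_not.2 ?_⟩
  induction n, hn using Nat.le_induction with
  | base => exact (hN k hk).1 hlt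
  | succ n hn ih =>
    obtain ⟨i, hi⟩ := ih
    obtain ⟨j, -, hj, -⟩ := (hN n (by lia)).2 i hi
    exact ⟨j, hj⟩

end SeniorityRun

end SeniorityRun

/-! ### Finite quotients that preserve the absence of fair runs -/

theorem injOn_getElem?_fin {β : Type*} (k : ℕ) :
    Set.InjOn (fun (l : List β) (i : Fin k) => l[(i : ℕ)]?) {l | l.length ≤ k} := by
  intro l hl l' hl' h
  refine List.ext_getElem? fun i => ?_
  by_cases hi : i < k
  · exact congrFun h ⟨i, hi⟩
  · rw [List.getElem?_eq_none (by grind), List.getElem?_eq_none (by grind)]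

/-- A vertex together with a list of thresholds that cut its ranks in different places. -/
structure SeniorVertex {V Q α : Type*} [Fintype Q] [LinearOrder α] (ρ : V → Q → α) where
  vertex : V
  seniority : List α
  nodup : (seniority.map (cut (ρ vertex))).Nodup

namespace SeniorVertex

universe u

variable {V I α : Type*} {Λ Q : Type u} [Fintype Q] [LinearOrder α] {ρ : V → Q → α}

/-- The finite information on a vertex that the quotient remembers: its label, and in which order
of seniority its ranks are cut, but not at which thresholds. -/
def shape (ℓ : V → Λ) (x : SeniorVertex ρ) : Λ × List (Finset Q) :=
  (ℓ x.vertex, x.seniority.map (cut (ρ x.vertex)))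

/-- The child of `x.vertex` in direction `i`, with the refreshed seniority list. -/
noncomputable def move [DecidableEq Q] (child : V → I → V) (x : SeniorVertex ρ) (i : I) :
    SeniorVertex ρ where
  vertex := child x.vertex i
  seniority := refresh (ρ (child x.vertex i)) x.seniority
  nodup := nodup_map_cut_refresh _ _

theorem exists_minimal_shape_eq [WellFoundedLT α] (ℓ : V → Λ) (s : Set.range (shape (ρ := ρ) ℓ)) :
    ∃ x : SeniorVertex ρ, shape ℓ x = s ∧
      ∀ y : SeniorVertex ρ, shape ℓ y = s → ¬ List.Shortlex (· < ·) y.seniority x.seniority :=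
  (InvImage.wf seniority (List.Shortlex.wf wellFounded_lt)).has_min
    {x : SeniorVertex ρ | shape ℓ x = s} s.2

theorem injective_shape_code (ℓ : V → Λ) :
    Function.Injective fun s : Set.range (shape (ρ := ρ) ℓ) =>
      (s.1.1, fun i : Fin (Fintype.card Q + 1) => s.1.2[(i : ℕ)]?) := by
  have hlen (s : Set.range (shape (ρ := ρ) ℓ)) : s.1.2.length ≤ Fintype.card Q + 1 := by
    obtain ⟨-, x, rfl⟩ := s
    simpa [shape] using length_le_of_nodup_map_cut _ x.nodup
  intro s t hst
  obtain ⟨hlabel, hcuts⟩ := Prod.mk.inj hst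
  exact Subtype.ext (Prod.ext hlabel (injOn_getElem?_fin _ (hlen s) (hlen t) hcuts))

theorem finite_range_shape [Finite Λ] (ℓ : V → Λ) : Finite (Set.range (shape (ρ := ρ) ℓ)) :=
  .of_injective _ (injective_shape_code ℓ)

theorem card_range_shape_le [Finite Λ] (ℓ : V → Λ) :
    Nat.card (Set.range (shape (ρ := ρ) ℓ)) ≤
      Nat.card Λ * (2 ^ Fintype.card Q + 1) ^ (Fintype.card Q + 1) := by
  simpa [Nat.card_eq_fintype_card, Finite.card_option] using
    Nat.card_le_card_of_injective _ (injective_shape_code (ρ := ρ) ℓ)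

end SeniorVertex

open SeniorVertex in
theorem exists_quotient_eventually_not_lt.{u} {V I α : Type*} {Λ Q : Type u} [Finite Λ] [Fintype Q]
    [LinearOrder α] [WellFoundedLT α] (ℓ : V → Λ) (child : V → I → V) (ρ : V → Q → α) :
    ∃ (S : Type u) (rep : S → V) (succ : S → I → S), Finite S ∧
      Nat.card S ≤ Nat.card Λ * (2 ^ Fintype.card Q + 1) ^ (Fintype.card Q + 1) ∧
      (∀ s i, ℓ (rep (succ s i)) = ℓ (child (rep s) i)) ∧ (∀ v, ∃ s, ℓ (rep s) = ℓ v) ∧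
      ∀ (s : ℕ → S) (d : ℕ → I) (q : ℕ → Q), (∀ n, s (n + 1) = succ (s n) (d n)) →
        (∀ n, ρ (child (rep (s n)) (d n)) (q (n + 1)) ≤ ρ (rep (s n)) (q n)) →
        ∀ᶠ n in atTop, ¬ ρ (child (rep (s n)) (d n)) (q (n + 1)) < ρ (rep (s n)) (q n) := by
  classical
  choose rep hrep hmin using exists_minimal_shape_eq (ρ := ρ) ℓ
  let succ (s : Set.range (shape (ρ := ρ) ℓ)) (i : I) : Set.range (shape (ρ := ρ) ℓ) :=
    ⟨shape ℓ ((rep s).move child i), Set.mem_range_self _⟩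
  refine ⟨_, fun s => (rep s).vertex, succ, finite_range_shape ℓ, card_range_shape_le ℓ,
    fun s i => congrArg Prod.fst (hrep (succ s i)), fun v => ?_, fun s d q hs hq => ?_⟩
  · let x : SeniorVertex ρ := ⟨v, [], List.nodup_nil⟩
    exact ⟨⟨shape ℓ x, x, rfl⟩, congrArg Prod.fst (hrep _)⟩
  · refine SeniorityRun.eventually_not_lt (ρ := fun n => ρ (rep (s n)).vertex)
      (σ := fun n => ρ (child (rep (s n)).vertex (d n))) (a := fun n => (rep (s n)).seniority)
      ⟨fun n => ?_, fun n l hl hlt => ?_⟩ hq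
    · rw [hs n]
      exact congrArg Prod.snd (hrep (succ (s n) (d n)))
    · rw [hs n] at hlt
      refine hmin (succ (s n) (d n)) ⟨child (rep (s n)).vertex (d n), l, ?_⟩ (Prod.ext rfl hl) hlt
      rw [hl]
      exact nodup_map_cut_refresh _ _

/-- The product of the `I`-branching graph `child` with an automaton whose transitions from `q` to
`q'` in direction `i` may depend on the label of the current vertex. -/
def threadStep {V I Λ Q : Type*} (ℓ : V → Λ) (child : V → I → V) (R : Λ → I → Q → Q → Prop)
    (x y : V × Q) : Prop :=
  ∃ i, y.1 = child x.1 i ∧ R (ℓ x.1) i x.2 y.2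

/-- The label of a quotient vertex is that of its representative, and so is the set of automaton
states without fair run. The rank of such a state does not increase along the quotient and drops
whenever `F` is visited, so `F` is visited finitely often only. -/
theorem exists_quotient_hasFairRun.{u} {V I : Type*} {Λ Q : Type u} [Finite Λ] [Finite Q]
    (ℓ : V → Λ) (child : V → I → V) (R : Λ → I → Q → Q → Prop) (F : Q → Prop) :
    ∃ (S : Type u) (rep : S → V) (succ : S → I → S), Finite S ∧
      Nat.card S ≤ Nat.card Λ * 2 ^ Nat.card Q * (2 ^ Nat.card Q + 1) ^ (Nat.card Q + 1) ∧
      (∀ s q, HasFairRun (threadStep (fun s => ℓ (rep s)) succ R) (fun x => F x.2) (s, q) →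
        HasFairRun (threadStep ℓ child R) (fun x => F x.2) (rep s, q)) ∧
      ∀ v, ∃ s, ∀ q, HasFairRun (threadStep ℓ child R) (fun x => F x.2) (rep s, q) →
        HasFairRun (threadStep ℓ child R) (fun x => F x.2) (v, q) := by
  have := Fintype.ofFinite Q
  let r := threadStep ℓ child R
  let G (x : V × Q) : Prop := F x.2
  let unfair (v : V) : Set Q := {q | ¬ HasFairRun r G (v, q)}
  obtain ⟨S, rep, succ, hfin, hcard, hsucc, hsurj, hdrop⟩ := exists_quotient_eventually_not_lt
    (fun v => (ℓ v, unfair v)) child (fun v q => fairRank r G (v, q))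
  refine ⟨S, rep, succ, hfin, ?_, fun s q ⟨u, hu₀, hu, hF⟩ => ?_, fun v => ?_⟩
  · simpa [Nat.card_eq_fintype_card] using hcard
  · by_contra hq
    choose d hd hR using hu
    have hstep (n : ℕ) : r (rep (u n).1, (u n).2) (child (rep (u n).1) (d n), (u (n + 1)).2) :=
      ⟨d n, rfl, hR n⟩
    have hunfair (n : ℕ) : ¬ HasFairRun r G (rep (u n).1, (u n).2) := by
      induction n with
      | zero => rwa [hu₀]
      | succ n ih =>
        have hmem : (u (n + 1)).2 ∈ unfair (child (rep (u n).1) (d n)) :=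
          fun h => ih (h.of_step (hstep n))
        rw [← (Prod.mk.inj (hsucc (u n).1 (d n))).2, ← hd n] at hmem
        exact hmem
    obtain ⟨n, hFn, hn⟩ := (hF.and_eventually (hdrop (fun n => (u n).1) d (fun n => (u n).2) hd
      fun n => fairRank_le_of_step (hunfair n) (hstep n))).exists
    exact hn (fairRank_lt_of_step (hunfair n) hFn (hstep n))
  · obtain ⟨s, hs⟩ := hsurj v
    refine ⟨s, fun q hq => by_contra fun hv => ?_⟩
    have hmem : q ∈ unfair v := hv
    rw [← (Prod.mk.inj hs).2] at hmem
    exact hmem hq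

/-! ### Breakpoints -/

/-- One step of the Miyano–Hayashi breakpoint construction: `O` collects the obligations of `P` that
have been outstanding ever since `O` was last empty, and is refilled once it is empty again. -/
def breakpointStep {α : Type*} [DecidableEq α] (O P : Finset α) : Finset α :=
  if O = ∅ then P else O ∩ P

section Breakpoint

variable {α : Type*} [DecidableEq α]

theorem breakpointStep_subset_right (O P : Finset α) : breakpointStep O P ⊆ P := by
  unfold breakpointStep
  split_ifs
  exacts [subset_rfl, Finset.inter_subset_right]

theorem breakpointStep_subset_left {O : Finset α} (hO : O ≠ ∅) (P : Finset α) :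
    breakpointStep O P ⊆ O := by
  rw [breakpointStep, if_neg hO]
  exact Finset.inter_subset_left

theorem mem_breakpointStep {O P : Finset α} {x : α} (hP : x ∈ P) (hO : O = ∅ ∨ x ∈ O) :
    x ∈ breakpointStep O P := by
  unfold breakpointStep
  split_ifs with h
  exacts [hP, Finset.mem_inter.2 ⟨hO.resolve_left h, hP⟩]

variable {O P : ℕ → Finset α}

theorem frequently_notMem_of_frequently_breakpoint
    (hO : ∀ n, O (n + 1) = breakpointStep (O n) (P (n + 1)))
    (hempty : ∃ᶠ n in atTop, O n = ∅) (x : α) : ∃ᶠ n in atTop, x ∉ P n := by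
  intro hx
  obtain ⟨N, hN⟩ := eventually_atTop.1 hx
  obtain ⟨k, hk, hOk⟩ := frequently_atTop.1 hempty N
  have hmem (n : ℕ) (hn : k + 1 ≤ n) : x ∈ O n := by
    induction n, hn using Nat.le_induction with
    | base => exact hO k ▸ mem_breakpointStep (not_not.1 (hN _ (by omega))) (.inl hOk)
    | succ n hn ih => exact hO n ▸ mem_breakpointStep (not_not.1 (hN _ (by omega))) (.inr ih)
  obtain ⟨n, hn, hOn⟩ := frequently_atTop.1 hempty (k + 1)
  exact Finset.notMem_empty x (hOn ▸ hmem n hn)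

theorem frequently_breakpoint_of_forall_frequently_notMem
    (hO : ∀ n, O (n + 1) = breakpointStep (O n) (P (n + 1)))
    (hP : ∀ x, ∃ᶠ n in atTop, x ∉ P n) : ∃ᶠ n in atTop, O n = ∅ := by
  intro hne
  have hanti : ∀ᶠ n in atTop, O (n + 1) = O n ∨ O (n + 1) ⊂ O n := by
    filter_upwards [hne] with n hn
    exact (hO n ▸ breakpointStep_subset_left hn _ : O (n + 1) ⊆ O n).eq_or_ssubset
  obtain ⟨C, hC⟩ := eventually_const_of_wellFounded Finset.isWellFounded_ssubset.wf hanti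
  obtain ⟨x, hx⟩ : C.Nonempty := by
    obtain ⟨n, hn, hCn⟩ := (hne.and hC).exists
    exact Finset.nonempty_iff_ne_empty.2 (hCn ▸ hn)
  obtain ⟨N, hN⟩ := eventually_atTop.1 hC
  obtain ⟨_ | n, hn, hxn⟩ := frequently_atTop.1 (hP x) (N + 1)
  · omega
  · have hxO : x ∈ O (n + 1) := by rwa [hN (n + 1) (by omega)]
    exact hxn (breakpointStep_subset_right (O n) _ (hO n ▸ hxO))

/-- The breakpoint sets along a sequence of obligations, starting from the empty set. -/
def breakpoints (P : ℕ → Finset α) : ℕ → Finset α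
  | 0 => ∅
  | n + 1 => breakpointStep (breakpoints P n) (P (n + 1))

theorem breakpoints_subset (P : ℕ → Finset α) : ∀ n, breakpoints P n ⊆ P n
  | 0 => Finset.empty_subset _
  | _ + 1 => breakpointStep_subset_right _ _

end Breakpoint

/-! ### Subformulas and satisfaction -/

namespace Form

theorem self_mem_subf (φ : Form) : φ ∈ φ.subf := by
  cases φ <;> simp [subf]

theorem subf_subset_of_mem {φ ψ : Form} (h : φ ∈ ψ.subf) : φ.subf ⊆ ψ.subf := by
  induction ψ with
  | tt | ff | prop _ | nprop _ => rw [Finset.mem_singleton.1 h]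
  | or a b iha ihb | and a b iha ihb | unt a b iha ihb | rel a b iha ihb =>
    rcases Finset.mem_insert.1 h with rfl | h
    · rfl
    · refine Finset.Subset.trans ?_ (Finset.subset_insert _ _)
      exact (Finset.mem_union.1 h).elim
        (fun h => (iha h).trans Finset.subset_union_left)
        (fun h => (ihb h).trans Finset.subset_union_right)
  | next a ih | ex a ih | al a ih =>
    rcases Finset.mem_insert.1 h with rfl | h
    exacts [subset_rfl, (ih h).trans (Finset.subset_insert _ _)]

theorem sizeOf_le_of_mem_subf {φ ψ : Form} (h : φ ∈ ψ.subf) : sizeOf φ ≤ sizeOf ψ := by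
  induction ψ <;> simp only [subf, Finset.mem_insert, Finset.mem_union, Finset.mem_singleton] at h
    <;> grind

theorem exists_mem_subf_ne_ex (θ : Form) : ∃ χ ∈ θ.subf, ∀ ψ, χ ≠ ex ψ := by
  induction θ with
  | ex a ih => exact ih.imp fun χ hχ => ⟨Finset.mem_insert_of_mem hχ.1, hχ.2⟩
  | _ => exact ⟨_, self_mem_subf _, fun _ => nofun⟩

/-- Literals and path quantifications. Every formula is a linear-time formula over its atomic
subformulas. -/
def IsAtomic : Form → Prop
  | or _ _ | and _ _ | next _ | unt _ _ | rel _ _ => False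
  | _ => True

end Form

namespace TS.Path

variable {S : Type} {T : TS S}

theorem suffix_suffix (p : T.Path) (n k : ℕ) : (p.suffix n).suffix k = p.suffix (n + k) := by
  simp only [suffix, Nat.add_assoc]

theorem suffix_zero (p : T.Path) : p.suffix 0 = p := by
  simp only [suffix, Nat.zero_add]

theorem ext_seq {p p' : T.Path} (h : ∀ n, p.seq n = p'.seq n) : p = p' := by
  cases p
  cases p'
  congr
  exact funext h

theorem sat_congr_of_isAtomic {φ : Form} (hφ : φ.IsAtomic) {p p' : T.Path}
    (h : p.seq 0 = p'.seq 0) : Sat T p φ ↔ Sat T p' φ := by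
  cases φ <;> simp_all [Form.IsAtomic, Sat]

theorem sat_unt_iff (p : T.Path) (a b : Form) :
    Sat T p (.unt a b) ↔ Sat T p b ∨ Sat T p a ∧ Sat T (p.suffix 1) (.unt a b) := by
  simp only [Sat, suffix_suffix, Nat.add_comm 1]
  rw [← Nat.or_exists_add_one]
  simp only [Nat.forall_lt_succ_left, suffix_zero, Nat.not_lt_zero, false_imp_iff,
    implies_true, and_true, and_left_comm, exists_and_left]

theorem sat_rel_iff (p : T.Path) (a b : Form) :
    Sat T p (.rel a b) ↔ Sat T p b ∧ (Sat T p a ∨ Sat T (p.suffix 1) (.rel a b)) := by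
  simp only [Sat, suffix_suffix, Nat.add_comm 1]
  rw [← Nat.and_forall_add_one]
  simp only [Nat.exists_lt_succ_left, suffix_zero, Nat.not_lt_zero, false_and,
    exists_false, or_false, or_left_comm, forall_or_left]

end TS.Path

/-! ### Refutations -/

/-- One step of a refutation: how the falsity of `φ` at a position is justified by the falsity of
the formulas in `Δ` at that position and of those in `Δ'` at the next one, where `Φ` contains the
true atomic formulas. -/
def Form.RefutedBy (Φ Δ Δ' : Finset Form) : Form → Prop
  | .or a b => a ∈ Δ ∧ b ∈ Δ
  | .and a b => a ∈ Δ ∨ b ∈ Δ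
  | .next a => a ∈ Δ'
  | .unt a b => b ∈ Δ ∧ (a ∈ Δ ∨ Form.unt a b ∈ Δ')
  | .rel a b => b ∈ Δ ∨ a ∈ Δ ∧ Form.rel a b ∈ Δ'
  | φ => φ ∉ Φ

open scoped Classical in
/-- The release formulas in `Δ` whose refutation is deferred to a later position. -/
noncomputable def unfulfilledReleases (Δ : Finset Form) : Finset Form :=
  {χ ∈ Δ | ∃ a b, χ = .rel a b ∧ b ∉ Δ}

theorem unfulfilledReleases_subset (Δ : Finset Form) : unfulfilledReleases Δ ⊆ Δ := by
  simp [unfulfilledReleases]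

theorem rel_mem_unfulfilledReleases {Δ : Finset Form} {a b : Form} :
    .rel a b ∈ unfulfilledReleases Δ ↔ .rel a b ∈ Δ ∧ b ∉ Δ := by
  simp [unfulfilledReleases]

/-- A sequence `Δ` of sets of formulas in which all falsity claims are justified, relative to the
sets `Φ` of true atomic formulas, and no release formula is deferred forever. -/
structure IsRefutation (Φ Δ : ℕ → Finset Form) : Prop where
  refutedBy : ∀ n, ∀ φ ∈ Δ n, φ.RefutedBy (Φ n) (Δ n) (Δ (n + 1))
  fair : ∀ χ, ∃ᶠ n in atTop, χ ∉ unfulfilledReleases (Δ n)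

namespace IsRefutation

variable {S : Type} {T : TS S} {p : T.Path} {Φ Δ : ℕ → Finset Form}

theorem not_sat_unt (hΔ : IsRefutation Φ Δ) {a b : Form}
    (ha : ∀ n, a ∈ Δ n → ¬ Sat T (p.suffix n) a) (hb : ∀ n, b ∈ Δ n → ¬ Sat T (p.suffix n) b)
    {n : ℕ} (hn : .unt a b ∈ Δ n) : ¬ Sat T (p.suffix n) (.unt a b) := by
  simp only [Sat, TS.Path.suffix_suffix]
  rintro ⟨k, hbk, hak⟩
  have hmem (j : ℕ) (hj : j ≤ k) : .unt a b ∈ Δ (n + j) := by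
    induction j with
    | zero => exact hn
    | succ j ih =>
      exact (hΔ.refutedBy _ _ (ih (by omega))).2.resolve_left fun h => ha _ h (hak j hj)
  exact hb _ (hΔ.refutedBy _ _ (hmem k le_rfl)).1 hbk

theorem not_sat_rel (hΔ : IsRefutation Φ Δ) {a b : Form}
    (ha : ∀ n, a ∈ Δ n → ¬ Sat T (p.suffix n) a) (hb : ∀ n, b ∈ Δ n → ¬ Sat T (p.suffix n) b)
    {n : ℕ} (hn : .rel a b ∈ Δ n) : ¬ Sat T (p.suffix n) (.rel a b) := by
  intro hsat
  have hdefer (k : ℕ) (hk : n ≤ k) : .rel a b ∈ Δ k ∧ Sat T (p.suffix k) (.rel a b) := by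
    induction k, hk using Nat.le_induction with
    | base => exact ⟨hn, hsat⟩
    | succ k _ ih =>
      have hunfold := (TS.Path.sat_rel_iff _ _ _).1 ih.2
      rw [TS.Path.suffix_suffix] at hunfold
      obtain ⟨hak, hrel⟩ :=
        (hΔ.refutedBy _ _ ih.1).resolve_left fun h => hb _ h hunfold.1
      exact ⟨hrel, hunfold.2.resolve_left (ha _ hak)⟩
  obtain ⟨k, hk, hfulfilled⟩ := frequently_atTop.1 (hΔ.fair (.rel a b)) n
  exact hfulfilled (rel_mem_unfulfilledReleases.2 ⟨(hdefer k hk).1,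
    fun h => hb k h ((TS.Path.sat_rel_iff _ _ _).1 (hdefer k hk).2).1⟩)

theorem not_sat (hΔ : IsRefutation Φ Δ)
    (hatom : ∀ n, ∀ χ ∈ Δ n, χ.IsAtomic → Sat T (p.suffix n) χ → χ ∈ Φ n) {φ : Form} {n : ℕ}
    (hφ : φ ∈ Δ n) : ¬ Sat T (p.suffix n) φ := by
  have hrefuted := hΔ.refutedBy n φ hφ
  induction φ generalizing n with
  | tt | ff | prop _ | nprop _ | ex _ _ | al _ _ =>
    exact fun h => hrefuted (hatom n _ hφ trivial h)
  | or a b iha ihb =>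
    exact not_or.2 ⟨iha hrefuted.1 (hΔ.refutedBy n a hrefuted.1),
      ihb hrefuted.2 (hΔ.refutedBy n b hrefuted.2)⟩
  | and a b iha ihb =>
    exact fun h => hrefuted.elim (fun ha => iha ha (hΔ.refutedBy n a ha) h.1)
      (fun hb => ihb hb (hΔ.refutedBy n b hb) h.2)
  | next a ih =>
    rw [Sat, TS.Path.suffix_suffix]
    exact ih hrefuted (hΔ.refutedBy (n + 1) a hrefuted)
  | unt a b iha ihb =>
    exact hΔ.not_sat_unt (fun k h => iha h (hΔ.refutedBy k a h))
      (fun k h => ihb h (hΔ.refutedBy k b h)) hφ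
  | rel a b iha ihb =>
    exact hΔ.not_sat_rel (fun k h => iha h (hΔ.refutedBy k a h))
      (fun k h => ihb h (hΔ.refutedBy k b h)) hφ

end IsRefutation

section FalseSubf

variable {S : Type} {T : TS S}

open scoped Classical in
/-- The subformulas of `ψ` that fail on the path `p`. -/
noncomputable def falseSubf (ψ : Form) (p : T.Path) : Finset Form :=
  {φ ∈ ψ.subf | ¬ Sat T p φ}

theorem mem_falseSubf {ψ φ : Form} {p : T.Path} :
    φ ∈ falseSubf ψ p ↔ φ ∈ ψ.subf ∧ ¬ Sat T p φ := by
  simp [falseSubf]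

theorem refutedBy_falseSubf {ψ φ : Form} {p : T.Path} {Φ : Finset Form}
    (hatom : ∀ χ ∈ ψ.subf, χ.IsAtomic → χ ∈ Φ → Sat T p χ) (hφ : φ ∈ falseSubf ψ p) :
    φ.RefutedBy Φ (falseSubf ψ p) (falseSubf ψ (p.suffix 1)) := by
  obtain ⟨hmem, hsat⟩ := mem_falseSubf.1 hφ
  have hsub : φ.subf ⊆ ψ.subf := Form.subf_subset_of_mem hmem
  cases φ with
  | tt | ff | prop _ | nprop _ | ex _ | al _ => exact fun h => hsat (hatom _ hmem trivial h)
  | or a b | and a b | next a =>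
    simp only [Form.subf, Finset.insert_subset_iff, Finset.union_subset_iff] at hsub
    simp only [Sat] at hsat
    simp only [Form.RefutedBy, mem_falseSubf]
    grind [Form.self_mem_subf]
  | unt a b =>
    simp only [Form.subf, Finset.insert_subset_iff, Finset.union_subset_iff] at hsub
    rw [TS.Path.sat_unt_iff] at hsat
    simp only [Form.RefutedBy, mem_falseSubf]
    grind [Form.self_mem_subf]
  | rel a b =>
    simp only [Form.subf, Finset.insert_subset_iff, Finset.union_subset_iff] at hsub
    rw [TS.Path.sat_rel_iff] at hsat
    simp only [Form.RefutedBy, mem_falseSubf]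
    grind [Form.self_mem_subf]

theorem isRefutation_falseSubf {ψ : Form} {p : T.Path} {Φ : ℕ → Finset Form}
    (hatom : ∀ n, ∀ χ ∈ ψ.subf, χ.IsAtomic → χ ∈ Φ n → Sat T (p.suffix n) χ) :
    IsRefutation Φ fun n => falseSubf ψ (p.suffix n) where
  refutedBy n φ hφ := by
    simpa only [TS.Path.suffix_suffix] using refutedBy_falseSubf (hatom n) hφ
  fair χ hχ := by
    obtain ⟨N, hN⟩ := eventually_atTop.1 hχ
    simp only [not_not] at hN
    obtain ⟨hmem, a, b, rfl, -⟩ := by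
      simpa only [unfulfilledReleases, Finset.mem_filter] using hN N le_rfl
    obtain ⟨hrel, hsat⟩ := mem_falseSubf.1 hmem
    have hb : b ∈ ψ.subf :=
      Form.subf_subset_of_mem hrel (by simp [Form.subf, Form.self_mem_subf])
    refine hsat fun k => .inl (by_contra fun hbk => ?_)
    rw [TS.Path.suffix_suffix] at hbk
    exact (rel_mem_unfulfilledReleases.1 (hN (N + k) (by omega))).2 (mem_falseSubf.2 ⟨hb, hbk⟩)

end FalseSubf

/-! ### Threads -/

/-- The directions in which a state of the model branches: `some ψ` starts a path that witnesses
`Eψ`, and `none` continues the current path. -/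
abbrev Dir (θ : Form) : Type := Option {ψ : Form // .ex ψ ∈ θ.subf}

theorem exists_injective_dir (θ : Form) : ∃ f : Dir θ → θ.subf, Function.Injective f := by
  obtain ⟨χ, hχ, hne⟩ := θ.exists_mem_subf_ne_ex
  refine ⟨fun d => d.elim ⟨χ, hχ⟩ fun ψ => ⟨.ex ψ.1, ψ.2⟩, ?_⟩
  rintro (_ | ψ) (_ | ψ') h
  · rfl
  · exact absurd (congrArg Subtype.val h) (hne _)
  · exact absurd (congrArg Subtype.val h).symm (hne _)
  · exact congrArg some (Subtype.ext (Form.ex.inj (congrArg Subtype.val h)))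

instance (θ : Form) : Finite (Dir θ) :=
  let ⟨f, hf⟩ := exists_injective_dir θ
  .of_injective f hf

theorem card_dir_le (θ : Form) : Nat.card (Dir θ) ≤ θ.subf.card := by
  obtain ⟨f, hf⟩ := exists_injective_dir θ
  simpa using Nat.card_le_card_of_injective f hf

theorem natCard_powerset {α : Type*} (s : Finset α) : Nat.card s.powerset = 2 ^ s.card := by
  rw [Nat.card_eq_fintype_card, Fintype.card_coe, Finset.card_powerset]

/-- A state of the automaton that guesses a refutation along a branch. In mode `none` it may follow
any branch; in mode `some d` it has to follow direction `d` and then continue with `none` forever.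
The field `pending` is the breakpoint set that enforces the fairness of the refutation. -/
structure ThreadState (θ : Form) where
  mode : Option (Dir θ)
  refuted : θ.subf.powerset
  pending : θ.subf.powerset

namespace ThreadState

variable {θ : Form}

theorem injective_toProd :
    Function.Injective fun q : ThreadState θ => (q.mode, q.refuted, q.pending) := by
  rintro ⟨⟩ ⟨⟩ h
  simpa using h

instance : Finite (ThreadState θ) :=
  .of_injective _ injective_toProd

/-- The transitions of the thread automaton in direction `d` at a vertex whose true subformulas
are `Φ`. -/
structure Step (Φ : θ.subf.powerset) (d : Dir θ) (q q' : ThreadState θ) : Prop where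
  refutedBy : ∀ φ ∈ q.refuted.1, φ.RefutedBy Φ q.refuted q'.refuted
  pending_eq : q'.pending.1 = breakpointStep q.pending (unfulfilledReleases q'.refuted)
  mode_eq : q'.mode = q.mode.map fun _ => none
  dir_eq : ∀ e ∈ q.mode, d = e

end ThreadState

/-- Some run of the thread automaton from `v` in mode `m` refutes `ψ`. -/
def HasFairThread {V : Type*} {θ : Form} (Φ : V → θ.subf.powerset) (child : V → Dir θ → V) (v : V)
    (m : Option (Dir θ)) (ψ : Form) : Prop :=
  ∃ q : ThreadState θ, q.mode = m ∧ ψ ∈ q.refuted.1 ∧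
    HasFairRun (threadStep Φ child ThreadState.Step) (fun x => x.2.pending.1 = ∅) (v, q)

theorem isRefutation_of_thread {θ : Form} {Φ : ℕ → θ.subf.powerset} {d : ℕ → Dir θ}
    {q : ℕ → ThreadState θ} (hstep : ∀ n, (q n).Step (Φ n) (d n) (q (n + 1)))
    (hfair : ∃ᶠ n in atTop, (q n).pending.1 = ∅) :
    IsRefutation (fun n => Φ n) fun n => (q n).refuted where
  refutedBy n := (hstep n).refutedBy
  fair := frequently_notMem_of_frequently_breakpoint (fun n => (hstep n).pending_eq) hfair

theorem hasFairThread_of_isRefutation {V : Type*} {θ ψ : Form} {Φ : V → θ.subf.powerset}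
    {child : V → Dir θ → V} {v : ℕ → V} {d : ℕ → Dir θ} {m : ℕ → Option (Dir θ)}
    {Δ : ℕ → θ.subf.powerset} (hv : ∀ n, v (n + 1) = child (v n) (d n))
    (hm : ∀ n, m (n + 1) = (m n).map fun _ => none) (hd : ∀ n, ∀ e ∈ m n, d n = e)
    (hΔ : IsRefutation (fun n => Φ (v n)) fun n => Δ n) (hψ : ψ ∈ (Δ 0).1) :
    HasFairThread Φ child (v 0) (m 0) ψ := by
  let O := breakpoints fun n => unfulfilledReleases (Δ n)
  have hO (n : ℕ) : O n ∈ θ.subf.powerset :=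
    Finset.mem_powerset.2 (((breakpoints_subset _ n).trans (unfulfilledReleases_subset _)).trans
      (Finset.mem_powerset.1 (Δ n).2))
  let q (n : ℕ) : ThreadState θ := ⟨m n, Δ n, O n, hO n⟩
  exact ⟨q 0, rfl, hψ, fun n => (v n, q n), rfl,
    fun n => ⟨d n, hv n, hΔ.refutedBy n, rfl, hm n, hd n⟩,
    frequently_breakpoint_of_forall_frequently_notMem (O := O) (fun _ => rfl) hΔ.fair⟩

theorem hasFairThread_of_not_sat {S : Type} {T : TS S} {θ ψ : Form} (hψ : ψ ∈ θ.subf)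
    {Φ : S → θ.subf.powerset} {succ : S → Dir θ → S} {p : T.Path}
    (hatom : ∀ χ ∈ ψ.subf, χ.IsAtomic → ∀ p : T.Path, χ ∈ (Φ (p.seq 0)).1 → Sat T p χ)
    {d : ℕ → Dir θ} {m : ℕ → Option (Dir θ)} (hp : ∀ n, p.seq (n + 1) = succ (p.seq n) (d n))
    (hm : ∀ n, m (n + 1) = (m n).map fun _ => none) (hd : ∀ n, ∀ e ∈ m n, d n = e)
    (hsat : ¬ Sat T p ψ) : HasFairThread Φ succ (p.seq 0) (m 0) ψ := by
  have hsub (n : ℕ) : falseSubf ψ (p.suffix n) ∈ θ.subf.powerset := by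
    refine Finset.mem_powerset.2 fun φ hφ => ?_
    exact Form.subf_subset_of_mem hψ (mem_falseSubf.1 hφ).1
  refine hasFairThread_of_isRefutation (Δ := fun n => ⟨_, hsub n⟩) hp hm hd
    (isRefutation_falseSubf fun n χ hχ hat => hatom χ hχ hat (p.suffix n)) ?_
  change ψ ∈ falseSubf ψ (p.suffix 0)
  rw [TS.Path.suffix_zero]
  exact mem_falseSubf.2 ⟨ψ.self_mem_subf, hsat⟩

/-! ### The tree of witness paths -/

section WitnessTree

variable {S : Type} {T : TS S} {θ : Form}

open scoped Classical in
/-- The path on which direction `d` proceeds from the vertex `π`. For `some ψ` it is the junk value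
`π` if no path from the first state of `π` satisfies `ψ`. -/
noncomputable def branch (π : T.Path) : Dir θ → T.Path
  | none => π
  | some ψ => if h : ∃ π' : T.Path, π'.seq 0 = π.seq 0 ∧ Sat T π' ψ then h.choose else π

/-- The child in direction `d` of the vertex `π` of the tree of witness paths. A vertex of this tree
is a path of `T`: it stands for the first state of that path together with the commitment that the
`none`-branch continues along the path. -/
noncomputable def branchTail (π : T.Path) (d : Dir θ) : T.Path :=
  (branch π d).suffix 1

open scoped Classical in
/-- The subformulas of `θ` that hold on the path `π`. -/
noncomputable def trueSubf (θ : Form) (π : T.Path) : θ.subf.powerset :=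
  ⟨{φ ∈ θ.subf | Sat T π φ}, Finset.mem_powerset.2 (Finset.filter_subset _ _)⟩

theorem mem_trueSubf {φ : Form} {π : T.Path} :
    φ ∈ (trueSubf θ π).1 ↔ φ ∈ θ.subf ∧ Sat T π φ := by
  simp [trueSubf]

theorem branch_seq_zero (π : T.Path) (d : Dir θ) : (branch π d).seq 0 = π.seq 0 := by
  cases d with
  | none => rfl
  | some ψ =>
    simp only [branch]
    split_ifs with h
    exacts [h.choose_spec.1, rfl]

theorem sat_branch_some {π : T.Path} {ψ : {ψ : Form // .ex ψ ∈ θ.subf}}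
    (h : Sat T π (.ex ψ)) : Sat T (branch (θ := θ) π (some ψ)) ψ := by
  have hwitness : ∃ π' : T.Path, π'.seq 0 = π.seq 0 ∧ Sat T π' ψ := h
  simpa only [branch, dif_pos hwitness] using hwitness.choose_spec.2

theorem exists_path_not_sat_of_thread {u : ℕ → T.Path × ThreadState θ}
    (hu : ∀ n, threadStep (trueSubf θ) branchTail ThreadState.Step (u n) (u (n + 1)))
    (hfair : ∃ᶠ n in atTop, (u n).2.pending.1 = ∅) :
    ∃ p : T.Path, (∀ n, p.seq n = (u n).1.seq 0) ∧ ∀ φ ∈ (u 0).2.refuted.1, ¬ Sat T p φ := by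
  choose d hd hstep using hu
  have hvalid (n : ℕ) : T.step ((u n).1.seq 0) ((u (n + 1)).1.seq 0) := by
    rw [hd n, ← branch_seq_zero (u n).1 (d n)]
    exact (branch (u n).1 (d n)).valid 0
  let p : T.Path := ⟨fun n => (u n).1.seq 0, hvalid⟩
  have hatom (n : ℕ) (χ : Form) (hχ : χ ∈ (u n).2.refuted.1) (hat : χ.IsAtomic)
      (hsat : Sat T (p.suffix n) χ) : χ ∈ (trueSubf θ (u n).1).1 :=
    mem_trueSubf.2 ⟨Finset.mem_powerset.1 (u n).2.refuted.2 hχ,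
      (TS.Path.sat_congr_of_isAtomic (p := p.suffix n) (p' := (u n).1) hat rfl).1 hsat⟩
  refine ⟨p, fun _ => rfl, fun φ hφ => ?_⟩
  rw [← p.suffix_zero]
  exact (isRefutation_of_thread hstep hfair).not_sat hatom hφ

theorem not_sat_al_of_hasFairThread {π : T.Path} {m : Option (Dir θ)} {ψ : Form}
    (h : HasFairThread (trueSubf θ) branchTail π m ψ) : ¬ Sat T π (.al ψ) := by
  obtain ⟨q, -, hψ, u, hu₀, hu, hfair⟩ := h
  obtain ⟨p, hp, hfalse⟩ := exists_path_not_sat_of_thread hu hfair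
  rw [hu₀] at hfalse
  exact fun hsat => hfalse ψ hψ (hsat p (by rw [hp, hu₀]))

theorem not_sat_branch_of_hasFairThread {π : T.Path} {d : Dir θ} {ψ : Form}
    (h : HasFairThread (trueSubf θ) branchTail π (some d) ψ) : ¬ Sat T (branch π d) ψ := by
  obtain ⟨q, hmode, hψ, u, hu₀, hu, hfair⟩ := h
  obtain ⟨p, hp, hfalse⟩ := exists_path_not_sat_of_thread hu hfair
  have hstays (n : ℕ) : (u (n + 1)).2.mode = some none ∧
      (u (n + 1)).1 = (branch π d).suffix (n + 1) := by
    induction n with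
    | zero =>
      obtain ⟨e, he, hstep⟩ := hu 0
      rw [hu₀] at he hstep
      exact ⟨by rw [hstep.mode_eq, hmode]; rfl, by rw [he, hstep.dir_eq d hmode]; rfl⟩
    | succ n ih =>
      obtain ⟨e, he, hstep⟩ := hu (n + 1)
      refine ⟨by rw [hstep.mode_eq, ih.1]; rfl, ?_⟩
      rw [he, hstep.dir_eq none ih.1, branchTail, branch, ih.2, TS.Path.suffix_suffix]
  have hbranch : p = branch π d := by
    refine TS.Path.ext_seq fun n => (hp n).trans ?_
    cases n with
    | zero => rw [hu₀, branch_seq_zero]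
    | succ n => rw [(hstays n).2]; rfl
  rw [hu₀] at hfalse
  exact hbranch ▸ hfalse ψ hψ

end WitnessTree

/-! ### The quotient of the tree of witness paths -/

/-- The transition system with a transition from `s` to `succ s i` for every `i`. -/
def TS.ofSucc {S I : Type} [Inhabited I] (init : S) (succ : S → I → S) (label : S → Set ℕ) :
    TS S where
  init := init
  step s t := ∃ i, t = succ s i
  total s := ⟨succ s default, default, rfl⟩
  label := label

/-- The path from `s` along the directions `d`. -/
def TS.pathAlong {S I : Type} [Inhabited I] {init : S} {succ : S → I → S} {label : S → Set ℕ}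
    (s : S) (d : ℕ → I) : (TS.ofSucc init succ label).Path where
  seq n := n.rec s fun k t => succ t (d k)
  valid n := ⟨d n, rfl⟩

theorem TS.ncard_step_ofSucc_le {S I : Type} [Inhabited I] [Finite I] (init : S)
    (succ : S → I → S) (label : S → Set ℕ) (s : S) :
    {t | (TS.ofSucc init succ label).step s t}.ncard ≤ Nat.card I := by
  have hrange : {t | (TS.ofSucc init succ label).step s t} = Set.range (succ s) := by
    ext t
    exact exists_congr fun _ => eq_comm
  rw [hrange, ← Nat.card_coe_set_eq]
  exact Finite.card_range_le _

/-- The directions of a path that starts in direction `d`. -/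
def startWith {θ : Form} (d : Dir θ) : ℕ → Dir θ
  | 0 => d
  | _ + 1 => none

section Adequacy

variable {S : Type} {θ ψ : Form} {Φ : S → θ.subf.powerset} {succ : S → Dir θ → S} {init : S}
  {label : S → Set ℕ}

theorem sat_of_not_hasFairThread_none (hψ : ψ ∈ θ.subf)
    (hatom : ∀ χ ∈ ψ.subf, χ.IsAtomic → ∀ p : (TS.ofSucc init succ label).Path,
      χ ∈ (Φ (p.seq 0)).1 → Sat _ p χ)
    {p : (TS.ofSucc init succ label).Path} (h : ¬ HasFairThread Φ succ (p.seq 0) none ψ) :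
    Sat _ p ψ := by
  choose d hd using p.valid
  by_contra hsat
  exact h (hasFairThread_of_not_sat (m := fun _ => none) hψ hatom hd (fun _ => rfl)
    (fun _ => nofun) hsat)

theorem sat_pathAlong_of_not_hasFairThread (hψ : ψ ∈ θ.subf)
    (hatom : ∀ χ ∈ ψ.subf, χ.IsAtomic → ∀ p : (TS.ofSucc init succ label).Path,
      χ ∈ (Φ (p.seq 0)).1 → Sat _ p χ)
    {s : S} {d : Dir θ} (h : ¬ HasFairThread Φ succ s (some d) ψ) :
    Sat (TS.ofSucc init succ label) (TS.pathAlong s (startWith d)) ψ := by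
  by_contra hsat
  exact h (hasFairThread_of_not_sat (p := TS.pathAlong s (startWith d)) (d := startWith d)
    (m := fun n => some (startWith d n)) hψ hatom (fun _ => rfl) (fun _ => rfl)
    (fun _ _ => Option.some.inj) hsat)

end Adequacy

theorem sat_of_mem_trueSubf {S₀ S : Type} {T : TS S₀} {θ : Form} {rep : S → T.Path}
    {succ : S → Dir θ → S} {init : S}
    (hquot : ∀ s m ψ, HasFairThread (fun s => trueSubf θ (rep s)) succ s m ψ →
      HasFairThread (trueSubf θ) branchTail (rep s) m ψ)
    {χ : Form} (hatomic : χ.IsAtomic)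
    (p : (TS.ofSucc init succ fun s => T.label ((rep s).seq 0)).Path)
    (hχ : χ ∈ (trueSubf θ (rep (p.seq 0))).1) : Sat _ p χ := by
  induction χ using (measure (sizeOf : Form → ℕ)).wf.induction generalizing p with
  | _ χ ih =>
  obtain ⟨hmem, hsat⟩ := mem_trueSubf.1 hχ
  cases χ with
  | tt | ff | prop _ | nprop _ => exact hsat
  | or _ _ | and _ _ | next _ | unt _ _ | rel _ _ => exact hatomic.elim
  | ex a =>
    have ha : a ∈ θ.subf :=
      Form.subf_subset_of_mem hmem (Finset.mem_insert_of_mem a.self_mem_subf)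
    refine ⟨TS.pathAlong (p.seq 0) (startWith (some ⟨a, hmem⟩)), rfl, ?_⟩
    refine sat_pathAlong_of_not_hasFairThread ha (fun χ hχ hat p' => ih χ ?_ hat p')
      fun h => not_sat_branch_of_hasFairThread (hquot _ _ _ h) (sat_branch_some hsat)
    exact Nat.lt_one_add_iff.2 (Form.sizeOf_le_of_mem_subf hχ)
  | al a =>
    have ha : a ∈ θ.subf :=
      Form.subf_subset_of_mem hmem (Finset.mem_insert_of_mem a.self_mem_subf)
    intro p' hp'
    refine sat_of_not_hasFairThread_none ha (fun χ hχ hat p' => ih χ ?_ hat p')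
      fun h => not_sat_al_of_hasFairThread (hquot _ _ _ h) (hp' ▸ hsat)
    exact Nat.lt_one_add_iff.2 (Form.sizeOf_le_of_mem_subf hχ)

theorem exists_quotient_hasFairThread {V : Type*} {θ : Form} (Φ : V → θ.subf.powerset)
    (child : V → Dir θ → V) :
    ∃ (S : Type) (rep : S → V) (succ : S → Dir θ → S), Finite S ∧
      Nat.card S ≤ 2 ^ θ.subf.card * 2 ^ Nat.card (ThreadState θ) *
        (2 ^ Nat.card (ThreadState θ) + 1) ^ (Nat.card (ThreadState θ) + 1) ∧
      (∀ s m ψ, HasFairThread (fun s => Φ (rep s)) succ s m ψ →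
        HasFairThread Φ child (rep s) m ψ) ∧
      ∀ v, ∃ s, ∀ m ψ, HasFairThread Φ child (rep s) m ψ → HasFairThread Φ child v m ψ := by
  obtain ⟨S, rep, succ, hfin, hcard, hquot, hsurj⟩ := exists_quotient_hasFairRun Φ child
    ThreadState.Step fun q => q.pending.1 = ∅
  refine ⟨S, rep, succ, hfin, ?_, fun s m ψ ⟨q, hm, hψ, h⟩ => ⟨q, hm, hψ, hquot s q h⟩,
    fun v => (hsurj v).imp fun s hs m ψ ⟨q, hm, hψ, h⟩ => ⟨q, hm, hψ, hs q h⟩⟩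
  rwa [natCard_powerset] at hcard

/-! ### The size of the model -/

theorem two_pow_mul_pow_le {n m : ℕ} (hn : 1 ≤ n) (hm : m ≤ 2 ^ (3 * n)) :
    2 ^ n * 2 ^ m * (2 ^ m + 1) ^ (m + 1) ≤ 2 ^ 2 ^ (10 * n) := by
  have hn' : n ≤ 2 ^ (3 * n) := by
    calc n ≤ 2 ^ n := Nat.lt_two_pow_self.le
      _ ≤ 2 ^ (3 * n) := Nat.pow_le_pow_right two_pos (by omega)
  have hexp : n + m + (m + 1) * (m + 1) ≤ 2 ^ (10 * n) := by
    calc n + m + (m + 1) * (m + 1) ≤ 6 * (2 ^ (3 * n) * 2 ^ (3 * n)) := by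
          nlinarith [Nat.one_le_two_pow (n := 3 * n)]
      _ ≤ 2 ^ (4 * n) * (2 ^ (3 * n) * 2 ^ (3 * n)) := by
          gcongr
          calc 6 ≤ 2 ^ 4 := by norm_num
            _ ≤ 2 ^ (4 * n) := Nat.pow_le_pow_right two_pos (by omega)
      _ = 2 ^ (10 * n) := by ring
  calc 2 ^ n * 2 ^ m * (2 ^ m + 1) ^ (m + 1)
      ≤ 2 ^ n * 2 ^ m * (2 ^ (m + 1)) ^ (m + 1) := by
        gcongr
        rw [pow_succ, mul_two]
        gcongr
        exact Nat.one_le_two_pow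
    _ = 2 ^ (n + m + (m + 1) * (m + 1)) := by rw [← pow_mul, ← pow_add, ← pow_add]
    _ ≤ 2 ^ 2 ^ (10 * n) := Nat.pow_le_pow_right two_pos hexp

theorem card_threadState_le (θ : Form) : Nat.card (ThreadState θ) ≤ 2 ^ (3 * θ.subf.card) := by
  calc Nat.card (ThreadState θ)
      ≤ (Nat.card (Dir θ) + 1) * (2 ^ θ.subf.card * 2 ^ θ.subf.card) := by
        simpa only [Finite.card_option, Nat.card_prod, natCard_powerset] using
          Nat.card_le_card_of_injective _ (ThreadState.injective_toProd (θ := θ))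
    _ ≤ 2 ^ θ.subf.card * (2 ^ θ.subf.card * 2 ^ θ.subf.card) := by
        gcongr
        exact (Nat.succ_le_succ (card_dir_le θ)).trans Nat.lt_two_pow_self
    _ = 2 ^ (3 * θ.subf.card) := by ring

theorem ctlstar_small_model_linear_branching_general :
    ∃ c : ℕ, 0 < c ∧ ∀ θ : Form, Satisfiable θ →
      ∃ (S : Type), Finite S ∧ ∃ (T : TS S) (π : T.Path),
        π.seq 0 = T.init ∧ Sat T π θ ∧
        Nat.card S ≤ 2 ^ 2 ^ (c * θ.subf.card) ∧
        ∀ s : S, {t : S | T.step s t}.ncard ≤ θ.subf.card := by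
  refine ⟨10, by norm_num, fun θ ⟨S₀, T, π, _, hπ⟩ => ?_⟩
  obtain ⟨S, rep, succ, hfin, hcard, hquot, hsurj⟩ :=
    exists_quotient_hasFairThread (trueSubf θ) (branchTail (T := T))
  obtain ⟨s, hs⟩ := hsurj π
  have hθ : 1 ≤ θ.subf.card := Finset.card_pos.2 ⟨θ, θ.self_mem_subf⟩
  refine ⟨S, hfin, TS.ofSucc s succ fun s => T.label ((rep s).seq 0),
    TS.pathAlong s (startWith none), rfl, ?_,
    hcard.trans (two_pow_mul_pow_le hθ (card_threadState_le θ)),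
    fun t => (TS.ncard_step_ofSucc_le s succ _ t).trans (card_dir_le θ)⟩
  exact sat_pathAlong_of_not_hasFairThread θ.self_mem_subf
    (fun _ _ hatomic => sat_of_mem_trueSubf hquot hatomic)
    fun h => not_sat_branch_of_hasFairThread (hs _ _ (hquot _ _ _ h)) hπ

/-- **Corollary (small model property, linear branching-width).** There is a
constant `c > 0` such that any satisfiable CTL* formula `θ` has a model of size at
most `2^(2^(c·|θ|))` and branching-width at most `|θ|`. -/
theorem ctlstar_small_model_linear_branching :
    ∃ c : ℕ, 0 < c ∧ ∀ θ : Form, IsStateForm θ → Satisfiable θ →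
      ∃ (S : Type), Finite S ∧ ∃ (T : TS S) (π : T.Path),
        π.seq 0 = T.init ∧ Sat T π θ ∧
        Nat.card S ≤ 2 ^ 2 ^ (c * θ.subf.card) ∧
        ∀ s : S, {t : S | T.step s t}.ncard ≤ θ.subf.card := by
  obtain ⟨c, hc, h⟩ := ctlstar_small_model_linear_branching_general
  exact ⟨c, hc, fun θ _ => h θ⟩
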